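/- arXiv:1911.13243 — 2 statements merged into one kernel-verified Lean document; each statement's English description precedes it below -/
import Mathlib

section
/- Fix a positive integer k and let N = (k+1)(k+2)/2. For every bijection f of [N] = {1,…,N} and every integer t with 1 ≤ t ≤ ⌊(k+1)/2⌋, the map v_t(f) is again a bijection of [N]. -/
/-!
The map `vmap k t f` is `f` precomposed with `σ = vmap k t id`, so it is enough that `σ` is an
involution of `[N]`. Cut `[N]` into consecutive blocks of length `k + 1`, writing
`x = (k + 1) * q + r` with `1 ≤ r ≤ k + 1`, so that `r = rfun k x`. In a full block, `σ` exchanges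
the first `t` positions with the last `t` ones by the translation `r ↔ r + (k + 1 - t)`; the two
ranges are disjoint because `2 * t ≤ k + 1`. If `k + 1 = 2 * m`, there is a final half block of
length `m ≥ t`, and there `σ` reverses the first `t` positions, `r ↔ t + 1 - r`. Every other
position is fixed. Thus each `x` has a partner `y` with `σ x = y` and `σ y = x`
(`exists_vmap_swap`).
-/

/-- The map `h_s`: given `f`, `h_s(f)(x) = f(s(k+1)+1-x)` for `1 ≤ x ≤ s(k+1)` and
`h_s(f)(x) = f(x)` otherwise. -/
def hmap (k s : ℕ) (f : ℕ → ℕ) : ℕ → ℕ := fun x =>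
  if 1 ≤ x ∧ x ≤ s * (k + 1) then f (s * (k + 1) + 1 - x) else f x

/-- `r_x`: the remainder of `x` upon division by `k+1`, except that `r_x = k+1`
when `k+1` divides `x`. -/
def rfun (k x : ℕ) : ℕ := if x % (k + 1) = 0 then k + 1 else x % (k + 1)

/-- The map `v_t` of the permutation lemmas. -/
def vmap (k t : ℕ) (f : ℕ → ℕ) : ℕ → ℕ := fun x =>
  if x ≤ (k + 1) * ((k + 2) / 2) then
    if rfun k x ≤ t then f (x + (k + 1) - t)
    else if rfun k x ≤ k + 1 - t then f x
    else f (x + t - (k + 1))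
  else
    if rfun k x ≤ t then f ((k + 1) ^ 2 + t + 1 - x)
    else f x

theorem rfun_mul_add {k q r : ℕ} (h1 : 1 ≤ r) (h2 : r ≤ k + 1) :
    rfun k ((k + 1) * q + r) = r := by
  unfold rfun
  rw [Nat.mul_add_mod]
  rcases h2.lt_or_eq with h | rfl
  · rw [Nat.mod_eq_of_lt h, if_neg (by omega)]
  · simp

/-- `vmap` inside a full block. -/
theorem vmap_full {k t q r : ℕ} (f : ℕ → ℕ) (ht : t ≤ k + 1) (hq : q < (k + 2) / 2)
    (h1 : 1 ≤ r) (h2 : r ≤ k + 1) :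
    vmap k t f ((k + 1) * q + r) =
      f ((k + 1) * q + if r ≤ t then r + (k + 1 - t) else if r ≤ k + 1 - t then r
        else r - (k + 1 - t)) := by
  have hx : (k + 1) * q + r ≤ (k + 1) * ((k + 2) / 2) := by
    have h : (k + 1) * (q + 1) ≤ (k + 1) * ((k + 2) / 2) := Nat.mul_le_mul_left _ hq
    rw [Nat.mul_succ] at h
    omega
  unfold vmap
  rw [if_pos hx, rfun_mul_add h1 h2]
  split_ifs <;> congr 1 <;> omega

/-- `vmap` inside the half block that ends `[N]` when `k + 1 = 2 * m`. -/
theorem vmap_half {k t m r : ℕ} (f : ℕ → ℕ) (hm : k + 1 = 2 * m) (h1 : 1 ≤ r) (h2 : r ≤ m) :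
    vmap k t f ((k + 1) * m + r) = f ((k + 1) * m + if r ≤ t then t + 1 - r else r) := by
  have hM : (k + 2) / 2 = m := by omega
  -- The half block starts after `(k + 1) * m`, which is half of `(k + 1) ^ 2`.
  have hsq : (k + 1) ^ 2 = (k + 1) * m + (k + 1) * m := by rw [hm]; ring
  unfold vmap
  rw [hM, if_neg (by omega), rfun_mul_add h1 (by omega)]
  split_ifs <;> congr 1
  omega

/-- `[N]` consists of `(k + 2) / 2` full blocks, followed by a half block when `k` is odd. -/
theorem mem_Icc_iff_blocks {k N x : ℕ} (hN : N = (k + 1) * (k + 2) / 2) :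
    x ∈ Set.Icc 1 N ↔ ∃ q r, x = (k + 1) * q + r ∧ 1 ≤ r ∧
      ((q < (k + 2) / 2 ∧ r ≤ k + 1) ∨ (k + 1 = 2 * q ∧ r ≤ q)) := by
  have hN' : (k + 1 = 2 * ((k + 2) / 2) ∧ N = (k + 1) * ((k + 2) / 2) + (k + 2) / 2) ∨
      (k + 2 = 2 * ((k + 2) / 2) ∧ N = (k + 1) * ((k + 2) / 2)) := by
    generalize hM : (k + 2) / 2 = M
    have h : k + 1 = 2 * M ∨ k + 2 = 2 * M := by omega
    rcases h with h | h
    · refine Or.inl ⟨h, ?_⟩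
      rw [hN, show (k + 1) * (k + 2) = 2 * ((k + 1) * M + M) by
        rw [show k + 2 = 2 * M + 1 by omega, h]; ring]
      omega
    · refine Or.inr ⟨h, ?_⟩
      rw [hN, h, show (k + 1) * (2 * M) = 2 * ((k + 1) * M) by ring]
      omega
  rw [Set.mem_Icc]
  generalize hM : (k + 2) / 2 = M at *
  constructor
  · rintro ⟨hx1, hx2⟩
    -- Dividing `x - 1` instead of `x` puts the position `r` in `1, …, k + 1`.
    have hd := Nat.div_add_mod (x - 1) (k + 1)
    have hl := Nat.mod_lt (x - 1) (Nat.succ_pos k)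
    generalize (x - 1) / (k + 1) = q at hd
    generalize (x - 1) % (k + 1) = s at hd hl
    refine ⟨q, s + 1, by omega, by omega, ?_⟩
    by_cases hq : q < M
    · exact Or.inl ⟨hq, hl⟩
    · rcases (not_lt.mp hq).eq_or_lt with rfl | hlt
      · right; omega
      · have h : (k + 1) * (M + 1) ≤ (k + 1) * q := Nat.mul_le_mul_left _ hlt
        rw [Nat.mul_succ] at h
        omega
  · rintro ⟨q, r, rfl, h1, ⟨hq, hr⟩ | ⟨hq, hr⟩⟩
    · have h : (k + 1) * (q + 1) ≤ (k + 1) * M := Nat.mul_le_mul_left _ hq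
      rw [Nat.mul_succ] at h
      omega
    · obtain rfl : q = M := by omega
      omega

/-- Every `x ∈ [N]` has a partner `y ∈ [N]`, not depending on `f`, whose value under `f` is
exchanged with that of `x`. -/
theorem exists_vmap_swap {k N t x : ℕ} (hN : N = (k + 1) * (k + 2) / 2)
    (ht : t ≤ (k + 1) / 2) (hx : x ∈ Set.Icc 1 N) :
    ∃ y ∈ Set.Icc 1 N, ∀ f : ℕ → ℕ, vmap k t f x = f y ∧ vmap k t f y = f x := by
  obtain ⟨q, r, rfl, h1, ⟨hq, hr⟩ | ⟨hq, hr⟩⟩ := (mem_Icc_iff_blocks hN).1 hx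
  · obtain ⟨s, hs⟩ : ∃ s, s = if r ≤ t then r + (k + 1 - t) else if r ≤ k + 1 - t then r
      else r - (k + 1 - t) := ⟨_, rfl⟩
    have hs1 : 1 ≤ s := by split_ifs at hs <;> omega
    have hs2 : s ≤ k + 1 := by split_ifs at hs <;> omega
    refine ⟨(k + 1) * q + s, (mem_Icc_iff_blocks hN).2 ⟨q, s, rfl, hs1, Or.inl ⟨hq, hs2⟩⟩,
      fun f => ⟨by rw [vmap_full f (by omega) hq h1 hr, hs], ?_⟩⟩
    rw [vmap_full f (by omega) hq hs1 hs2]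
    congr 2
    split_ifs at hs ⊢ <;> omega
  · obtain ⟨s, hs⟩ : ∃ s, s = if r ≤ t then t + 1 - r else r := ⟨_, rfl⟩
    have hs1 : 1 ≤ s := by split_ifs at hs <;> omega
    have hs2 : s ≤ q := by split_ifs at hs <;> omega
    refine ⟨(k + 1) * q + s, (mem_Icc_iff_blocks hN).2 ⟨q, s, rfl, hs1, Or.inr ⟨hq, hs2⟩⟩,
      fun f => ⟨by rw [vmap_half f hq h1 hr, hs], ?_⟩⟩
    rw [vmap_half f hq hs1 hs2]
    congr 2
    split_ifs at hs ⊢ <;> omega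

theorem stmt5 (k N : ℕ) (hk : 0 < k) (hN : N = (k + 1) * (k + 2) / 2)
    (f : ℕ → ℕ) (hf : Set.BijOn f (Set.Icc 1 N) (Set.Icc 1 N))
    (t : ℕ) (ht1 : 1 ≤ t) (ht2 : t ≤ (k + 1) / 2) :
    Set.BijOn (vmap k t f) (Set.Icc 1 N) (Set.Icc 1 N) := by
  have key := fun x (hx : x ∈ Set.Icc 1 N) => exists_vmap_swap hN ht2 hx
  have hmaps : Set.MapsTo (vmap k t id) (Set.Icc 1 N) (Set.Icc 1 N) := by
    intro x hx
    obtain ⟨y, hy, h⟩ := key x hx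
    rwa [(h id).1]
  have hinv : Set.LeftInvOn (vmap k t id) (vmap k t id) (Set.Icc 1 N) := by
    intro x hx
    obtain ⟨y, -, h⟩ := key x hx
    rw [(h id).1, id, (h id).2, id]
  have hσ : Set.BijOn (vmap k t id) (Set.Icc 1 N) (Set.Icc 1 N) :=
    Set.InvOn.bijOn ⟨hinv, hinv⟩ hmaps hmaps
  refine (hf.comp hσ).congr fun x hx => ?_
  obtain ⟨y, -, h⟩ := key x hx
  rw [Function.comp_apply, (h id).1, (h f).1, id]
end

section
/- Fix a positive integer k and let N = (k+1)(k+2)/2. For every bijection f of [N] = {1,…,N} and all integers s, t with 1 ≤ s ≤ ⌊(k+2)/2⌋ and 1 ≤ t ≤ ⌊(k+1)/2⌋, the maps h_s and v_t commute: v_t(h_s(f)) = h_s(v_t(f)). -/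
theorem rfun_row {k q r : ℕ} (h1 : 1 ≤ r) (h2 : r ≤ k + 1) :
    rfun k (q * (k + 1) + r) = r := by
  unfold rfun
  rw [add_comm, Nat.add_mul_mod_self_right]
  rcases h2.lt_or_eq with h | h
  · rw [Nat.mod_eq_of_lt h, if_neg (by omega)]
  · subst h
    simp

theorem exists_row (k x : ℕ) (hx : 1 ≤ x) :
    ∃ q r, 1 ≤ r ∧ r ≤ k + 1 ∧ x = q * (k + 1) + r := by
  refine ⟨(x - 1) / (k + 1), (x - 1) % (k + 1) + 1, by omega, ?_, ?_⟩
  · exact Nat.mod_lt _ (Nat.succ_pos k)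
  · have := Nat.div_add_mod' (x - 1) (k + 1)
    omega

theorem row_le_iff {k q r s : ℕ} (h1 : 1 ≤ r) (h2 : r ≤ k + 1) :
    q * (k + 1) + r ≤ s * (k + 1) ↔ q < s := by
  constructor
  · intro h
    by_contra! hc
    have := Nat.mul_le_mul_right (k + 1) hc
    omega
  · intro h
    have := Nat.mul_le_mul_right (k + 1) (Nat.succ_le_of_lt h)
    rw [Nat.succ_mul] at this
    omega

/-- In row and column coordinates, `h_s` rotates the first `s` rows by a half turn. -/
theorem hmap_of_lt {k s q r : ℕ} (f : ℕ → ℕ) (h1 : 1 ≤ r) (h2 : r ≤ k + 1) (hq : q < s) :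
    hmap k s f (q * (k + 1) + r) = f ((s - 1 - q) * (k + 1) + (k + 2 - r)) := by
  unfold hmap
  rw [if_pos ⟨by omega, (row_le_iff h1 h2).2 hq⟩]
  congr 1
  obtain ⟨d, rfl⟩ := Nat.exists_eq_add_of_lt hq
  have e : q + d + 1 - 1 - q = d := by omega
  have e2 : (q + d + 1) * (k + 1) = q * (k + 1) + d * (k + 1) + (k + 1) := by ring
  rw [e, e2]
  omega

theorem hmap_of_le {k s q r : ℕ} (f : ℕ → ℕ) (h1 : 1 ≤ r) (h2 : r ≤ k + 1) (hq : s ≤ q) :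
    hmap k s f (q * (k + 1) + r) = f (q * (k + 1) + r) := by
  unfold hmap
  rw [if_neg]
  rw [row_le_iff h1 h2]
  omega

/-- In a full row, `v_t` exchanges the first and last `t` columns, keeping the row index `q`;
the bound on `t` makes these two blocks of columns disjoint. -/
theorem vmap_row {k t q r : ℕ} (f : ℕ → ℕ) (h1 : 1 ≤ r) (h2 : r ≤ k + 1) (hq : q < (k + 2) / 2)
    (ht : t ≤ (k + 1) / 2) :
    vmap k t f (q * (k + 1) + r) =
      if r ≤ t then f (q * (k + 1) + (r + (k + 1) - t))
      else if r ≤ k + 1 - t then f (q * (k + 1) + r)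
      else f (q * (k + 1) + (r + t - (k + 1))) := by
  unfold vmap
  rw [if_pos (by rw [mul_comm (k + 1)]; exact (row_le_iff h1 h2).2 hq), rfun_row h1 h2]
  split_ifs
  · congr 1
    omega
  · rfl
  · congr 1
    omega

theorem stmt7 (k N : ℕ) (hk : 0 < k) (hN : N = (k + 1) * (k + 2) / 2)
    (f : ℕ → ℕ) (hf : Set.BijOn f (Set.Icc 1 N) (Set.Icc 1 N))
    (s t : ℕ) (hs1 : 1 ≤ s) (hs2 : s ≤ (k + 2) / 2)
    (ht1 : 1 ≤ t) (ht2 : t ≤ (k + 1) / 2) :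
    Set.EqOn (vmap k t (hmap k s f)) (hmap k s (vmap k t f)) (Set.Icc 1 N) := by
  rintro x ⟨hx1, hxN⟩
  obtain ⟨q, r, h1, h2, rfl⟩ := exists_row k x hx1
  rcases lt_or_ge q ((k + 2) / 2) with hq | hq
  · rw [vmap_row _ h1 h2 hq ht2]
    rcases lt_or_ge q s with hqs | hqs
    · rw [hmap_of_lt f h1 h2 hqs, hmap_of_lt (vmap k t f) h1 h2 hqs,
        vmap_row f (by omega) (by omega) (by omega) ht2]
      split_ifs
      all_goals first
        | omega
        | rfl
        | (rw [hmap_of_lt _ (by omega) (by omega) hqs]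
           congr 2
           omega)
    · rw [hmap_of_le f h1 h2 hqs, hmap_of_le (vmap k t f) h1 h2 hqs, vmap_row f h1 h2 hq ht2]
      split_ifs
      · exact hmap_of_le _ (by omega) (by omega) hqs
      · rfl
      · exact hmap_of_le _ (by omega) (by omega) hqs
  · rw [hmap_of_le _ h1 h2 (hs2.trans hq)]
    have hnot : ¬ q * (k + 1) + r ≤ (k + 1) * ((k + 2) / 2) := by
      rw [mul_comm (k + 1) ((k + 2) / 2), row_le_iff h1 h2]
      omega
    unfold vmap
    rw [if_neg hnot, if_neg hnot, rfun_row h1 h2]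
    rcases Nat.even_or_odd' k with ⟨a, rfl | rfl⟩
    · -- For even `k` the `(k + 2) / 2` full rows already exhaust `1, …, N`.
      exfalso
      apply hnot
      rw [← Nat.mul_div_assoc _ (by omega : 2 ∣ 2 * a + 2), ← hN]
      exact hxN
    · -- For `k = 2 a + 1` the element lies in the short row `q = a + 1`.
      have ha : (2 * a + 1 + 2) / 2 = a + 1 := by omega
      rw [ha] at hq hs2
      have hN' : N = (a + 1) * (2 * a + 1 + 1) + (a + 1) := by
        rw [hN]
        apply Nat.div_eq_of_eq_mul_left (by norm_num)
        ring
      have hq' : q = a + 1 := by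
        have hlt : q < a + 2 := (row_le_iff h1 h2).1 (by
          rw [hN'] at hxN
          nlinarith)
        omega
      subst hq'
      have hsq : (2 * a + 1 + 1) ^ 2 = (a + 1) * (2 * a + 1 + 1) + (a + 1) * (2 * a + 1 + 1) := by
        ring
      split_ifs with hr
      · have e : (2 * a + 1 + 1) ^ 2 + t + 1 - ((a + 1) * (2 * a + 1 + 1) + r)
            = (a + 1) * (2 * a + 1 + 1) + (t + 1 - r) := by
          rw [hsq]
          omega
        rw [e]
        exact hmap_of_le _ (by omega) (by omega) hs2
      · exact hmap_of_le _ h1 h2 hs2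
end
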